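/- Provided 4ρ < n^{1/d}, one has Var(S) = n(1 − φ/n)^{n−1}(1 − (1 − φ/n)^{n−1}) + (n−1) ∫_{B_{2ρ}(𝟎) \ B_ρ(𝟎)} (1 − ρ^d ω_d(|y|/ρ)/n)^{n−2} dy + n(n−1)( (1 − 2^d φ/n)(1 − 2φ/n)^{n−2} − (1 − φ/n)^{2n−2} ), where the integral is over the toroidal annulus B_{2ρ}(𝟎) \ B_ρ(𝟎) ⊂ C_n and |y| denotes the toroidal distance from y to 𝟎. -/

import Mathlib

open MeasureTheory ProbabilityTheory Filter Set Metric
open scoped ENNReal NNReal BigOperators Topology Classical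

noncomputable section

/-- Side length `n^(1/d)` of the cube `C_n` of volume `n` in dimension `d`. -/
def sideLen (d n : ℕ) : ℝ := (n : ℝ) ^ ((d : ℝ)⁻¹)

/-- The cube `C_n = [0, L)^d`. -/
def box (d : ℕ) (L : ℝ) : Set (Fin d → ℝ) := Set.univ.pi fun _ => Set.Ico (0 : ℝ) L

/-- The Euclidean toroidal distance on the cube `[0, L)^d`. -/
def torDist {d : ℕ} (L : ℝ) (x y : Fin d → ℝ) : ℝ :=
  Real.sqrt (∑ i, (⨅ k : ℤ, |x i - y i - k * L|) ^ 2)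

/-- The toroidal ball `B_r(x) = {y ∈ C_n : D(x,y) ≤ r}`. -/
def torBall {d : ℕ} (L : ℝ) (x : Fin d → ℝ) (r : ℝ) : Set (Fin d → ℝ) :=
  {y ∈ box d L | torDist L x y ≤ r}

/-- Addition (translation) in the torus `[0, L)^d`. -/
def torAdd {d : ℕ} (L : ℝ) (y x : Fin d → ℝ) : Fin d → ℝ :=
  fun i => L * Int.fract ((y i + x i) / L)

/-- The uniform probability measure on the cube `[0, L)^d`. -/
def uniformBox (d : ℕ) (L : ℝ) : Measure (Fin d → ℝ) :=
  ((L.toNNReal ^ d)⁻¹ : ℝ≥0) • volume.restrict (box d L)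

/-- The joint law of `n` independent points uniformly distributed on the cube `C_n`
of volume `n`; a point configuration is `ω : Fin n → (Fin d → ℝ)`, with `U_i = ω i`. -/
def binppLaw (d n : ℕ) : Measure (Fin n → Fin d → ℝ) :=
  Measure.pi fun _ => uniformBox d (sideLen d n)

/-- The total covered volume `V` of the union of toroidal balls of radius `ρ`
centered at the `n` points. -/
def coveredVol (d n : ℕ) (ρ : ℝ) (ω : Fin n → Fin d → ℝ) : ℝ :=
  (volume (⋃ i, torBall (sideLen d n) (ω i) ρ)).toReal

/-- The number `S` of isolated points: indices `i` with `𝒰_n ∩ B_ρ(U_i) = {U_i}`. -/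
def isolCount (d n : ℕ) (ρ : ℝ) (ω : Fin n → Fin d → ℝ) : ℝ :=
  ∑ i, if Set.range ω ∩ torBall (sideLen d n) (ω i) ρ = {ω i} then 1 else 0

/-- `π_d`: the volume of the unit ball in `ℝ^d`. -/
def unitBallVol (d : ℕ) : ℝ :=
  (volume (Metric.closedBall (0 : EuclideanSpace ℝ (Fin d)) 1)).toReal

/-- `φ = π_d ρ^d`. -/
def phi (d : ℕ) (ρ : ℝ) : ℝ := unitBallVol d * ρ ^ d

/-- The standard normal cumulative distribution function. -/
def stdGaussCDF (t : ℝ) : ℝ := (gaussianReal 0 1 (Set.Iic t)).toReal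

/-- The Kolmogorov distance `D_X` between the law of the standardized version of `X`
and the standard normal. -/
def kolDist {Ω : Type*} [MeasurableSpace Ω] (P : Measure Ω) (X : Ω → ℝ) : ℝ :=
  ⨆ t : ℝ,
    |(P {ω | (X ω - ∫ x, X x ∂P) / Real.sqrt (variance X P) ≤ t}).toReal - stdGaussCDF t|

/-- A fixed unit vector in `ℝ^d` (junk value `0` if `d = 0`). -/
def unitVec (d : ℕ) : EuclideanSpace ℝ (Fin d) :=
  if h : 0 < d then EuclideanSpace.single (⟨0, h⟩ : Fin d) 1 else 0

/-- `ω_d(r)`: the volume of the union of two unit balls in `ℝ^d` whose centers are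
at distance `r` apart. -/
def omegaVol (d : ℕ) (r : ℝ) : ℝ :=
  (volume (Metric.closedBall (0 : EuclideanSpace ℝ (Fin d)) 1 ∪
      Metric.closedBall (r • unitVec d) 1)).toReal

/-- The integral `J_{r,d}(ρ) = d π_d ∫_0^r exp(-ρ^d ω_d(t)) t^{d-1} dt`. -/
def Jint (r : ℝ) (d : ℕ) (ρ : ℝ) : ℝ :=
  d * unitBallVol d * ∫ t in (0:ℝ)..r, Real.exp (-(ρ ^ d * omegaVol d t)) * t ^ (d - 1)

/-- The limiting variance density `g_V(ρ)`. -/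
def gV (d : ℕ) (ρ : ℝ) : ℝ :=
  ρ ^ d * Jint 2 d ρ - (2 ^ d * phi d ρ + phi d ρ ^ 2) * Real.exp (-(2 * phi d ρ))

/-- The limiting variance density `g_S(ρ)`. -/
def gS (d : ℕ) (ρ : ℝ) : ℝ :=
  Real.exp (-phi d ρ) - (1 + (2 ^ d - 2) * phi d ρ + phi d ρ ^ 2) * Real.exp (-(2 * phi d ρ))
    + ρ ^ d * (Jint 2 d ρ - Jint 1 d ρ)

/-- `κ_d`: the maximum number of closed unit balls in `ℝ^d` that can be packed so that
they all intersect a closed unit ball at the origin but are pairwise disjoint. -/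
def kappa (d : ℕ) : ℕ :=
  sSup {k : ℕ | ∃ c : Fin k → EuclideanSpace ℝ (Fin d),
    (∀ i, (Metric.closedBall (c i) 1 ∩ Metric.closedBall 0 1).Nonempty) ∧
    Pairwise fun i j => Disjoint (Metric.closedBall (c i) 1) (Metric.closedBall (c j) 1)}

/-- `η_V(n, ρ)`. -/
def etaV (d n : ℕ) (ρ : ℝ) : ℝ :=
  2 * phi d ρ ^ 2 * ((3 ^ d + 1) * phi d ρ + 1) ^ 2 *
      (1 + (2 ^ d + 1) * 6 ^ d * phi d ρ +
        ((2 * n - 6 ^ d * phi d ρ) / (n - 6 ^ d * phi d ρ)) * 6 ^ (2 * d) * phi d ρ ^ 2) +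
    2 * phi d ρ ^ 4 *
      (3 * (4 ^ d + 2 ^ d) * phi d ρ +
        3 * 4 ^ d * phi d ρ ^ 2 * ((2 * n - 3 * 2 ^ d * phi d ρ) / (n - 3 * 2 ^ d * phi d ρ)) +
        4 + 2 / n)

/-- `η_S(n, ρ)`. -/
def etaS (d n : ℕ) (ρ : ℝ) : ℝ :=
  2 * (1 + 2 * (kappa d : ℝ)) ^ 2 *
      (1 + (2 ^ d + 1) * 3 ^ d * phi d ρ +
        ((2 * n - 3 ^ d * phi d ρ) / (n - 3 ^ d * phi d ρ)) * 9 ^ d * phi d ρ ^ 2) +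
    (((1 : ℝ) + kappa d) ^ 2 / 2) *
      ((2 ^ d + 2 * 3 ^ d + 3) * phi d ρ +
        (2 ^ (d + 1) + 1) *
          ((2 * n - (2 ^ (d + 1) + 1) * phi d ρ) / (n - (2 ^ (d + 1) + 1) * phi d ρ)) *
          phi d ρ ^ 2 +
        (4 * n - 2) / (n - 1))


section Generic
set_option linter.unusedSectionVars false
variable {G : Type*} [AddCommGroup G] [MeasurableSpace G] [MeasurableSub₂ G] [MeasurableAdd G] (μ : Measure G)
  [IsProbabilityMeasure μ]

lemma pi_split {m : ℕ} (i : Fin (m+1)) {E : Set (Fin (m+1) → G)} (hE : MeasurableSet E) :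
    Measure.pi (fun _ => μ) E =
      ∫⁻ x, Measure.pi (fun _ : Fin m => μ) {z | (i.insertNth x z : Fin (m+1) → G) ∈ E} ∂μ := by
  have h := (measurePreserving_piFinSuccAbove (fun _ : Fin (m+1) => μ) i).symm
  rw [← h.measure_preimage hE.nullMeasurableSet, Measure.prod_apply (h.measurable hE)]
  rfl

lemma pi_all (m : ℕ) (C : Set G) :
    Measure.pi (fun _ : Fin m => μ) {z | ∀ k, z k ∈ C} = μ C ^ m := by
  have : {z : Fin m → G | ∀ k, z k ∈ C} = univ.pi (fun _ => C) := by ext; simp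
  rw [this, Measure.pi_pi]; simp

def isoEv {n : ℕ} (A : Set G) (i : Fin n) : Set (Fin n → G) := {w | ∀ k, k ≠ i → w i - w k ∉ A}

variable {A : Set G} 

lemma measurableSet_isoEv (hA : MeasurableSet A) {n : ℕ} (i : Fin n) : MeasurableSet (isoEv A i) := by
  unfold isoEv
  have : {w : Fin n → G | ∀ k, k ≠ i → w i - w k ∉ A} =
      ⋂ k, ⋂ (_ : k ≠ i), (fun w : Fin n → G => w i - w k) ⁻¹' Aᶜ := by
    ext; simp
  rw [this]
  refine MeasurableSet.iInter fun k => MeasurableSet.iInter fun _ => ?_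
  exact (((measurable_pi_apply i).sub (measurable_pi_apply k))) hA.compl

lemma meas_shift [μ.IsAddLeftInvariant] (C : Set G) (x : G) : μ {z | z - x ∈ C} = μ C := by
  have := measure_preimage_add μ (-x) C
  rw [← this]; congr 1; ext z; simp [neg_add_eq_sub]

lemma prob_one [μ.IsAddLeftInvariant] (hA : MeasurableSet A) (hs : ∀ x, -x ∈ A ↔ x ∈ A) {m : ℕ} (i : Fin (m+1)) :
    Measure.pi (fun _ => μ) (isoEv A i) = μ Aᶜ ^ m := by
  rw [pi_split μ i (measurableSet_isoEv hA i)]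
  have : ∀ x, Measure.pi (fun _ : Fin m => μ) {z | (i.insertNth x z : Fin (m+1) → G) ∈ isoEv A i}
      = μ Aᶜ ^ m := by
    intro x
    rw [← meas_shift μ Aᶜ x, ← pi_all]
    congr 1; ext z
    simp only [isoEv, mem_ofPred_eq, Fin.forall_iff_succAbove i]
    simp only [ne_eq, not_true_eq_false, false_imp_iff, true_and, Fin.insertNth_apply_same,
      Fin.insertNth_apply_succAbove, Fin.succAbove_ne, not_false_eq_true, true_imp_iff, mem_compl_iff]
    refine forall_congr' fun k => ?_
    rw [← hs (x - z k), neg_sub]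
  simp [this]

def pairF (μ : Measure G) (A : Set G) (u : G) : ℝ≥0∞ := μ {z | z ∉ A ∧ z - u ∉ A}

lemma measurable_pairF (hA : MeasurableSet A) : Measurable (pairF μ A) := by
  have : MeasurableSet {p : G × G | p.2 ∉ A ∧ p.2 - p.1 ∉ A} :=
    (measurable_snd hA.compl).inter ((measurable_snd.sub measurable_fst) hA.compl)
  exact measurable_measure_prodMk_left this

lemma prob_two [μ.IsAddLeftInvariant] (hA : MeasurableSet A) (hs : ∀ x, -x ∈ A ↔ x ∈ A)
    {m : ℕ} (i j : Fin (m+2)) (hij : i ≠ j) :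
    Measure.pi (fun _ => μ) (isoEv A i ∩ isoEv A j) = ∫⁻ y in Aᶜ, pairF μ A y ^ m ∂μ := by
  obtain ⟨j, rfl⟩ := Fin.exists_succAbove_eq hij.symm
  have hm := (measurableSet_isoEv hA i).inter (measurableSet_isoEv hA (i.succAbove j))
  rw [pi_split μ i hm]
  have key : ∀ x, Measure.pi (fun _ : Fin (m+1) => μ) 
     {z | (i.insertNth x z : Fin (m+2) → G) ∈ isoEv A i ∩ isoEv A (i.succAbove j)}
      = ∫⁻ y in Aᶜ, pairF μ A y ^ m ∂μ := by
    intro x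
    rw [pi_split μ j]
    swap
    · have : Measurable (fun z : Fin (m+1) → G => (i.insertNth x z : Fin (m+2) → G)) := by
        refine measurable_pi_iff.2 ?_
        rw [Fin.forall_iff_succAbove i]
        simp only [Fin.insertNth_apply_same, Fin.insertNth_apply_succAbove]
        exact ⟨measurable_const, fun k => measurable_pi_apply k⟩
      exact this hm
    rw [← lintegral_indicator hA.compl, ← lintegral_add_left_eq_self (Aᶜ.indicator _) (-x)]
    congr 1; ext y
    rw [indicator_apply]
    have e : ∀ z : Fin m → G, ((i.insertNth x (j.insertNth y z : Fin (m+1) → G) : Fin (m+2) → G)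
         ∈ isoEv A i ∩ isoEv A (i.succAbove j)) ↔ ( -x + y ∉ A ∧ 
        ∀ k, z k ∈ {w | w - x ∈ {w | w ∉ A ∧ w - (-x+y) ∉ A}}) := by
      intro z
      have e1 : ∀ k, (j.succAbove k = j) = False := fun k => by simp [Fin.succAbove_ne]
      simp only [isoEv, mem_inter_iff, mem_ofPred_eq, Fin.forall_iff_succAbove i]
      simp only [ne_eq, not_true_eq_false, false_imp_iff, true_and, Fin.insertNth_apply_same,
        Fin.insertNth_apply_succAbove, Fin.succAbove_ne, not_false_eq_true, true_imp_iff, 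
        Fin.forall_iff_succAbove j, Fin.succAbove_right_inj, e1]
      have a1 : x - y ∉ A ↔ -x + y ∉ A := by rw [← hs]; simp [neg_add_eq_sub]
      have a2 : y - x ∉ A ↔ -x + y ∉ A := by simp [neg_add_eq_sub]
      have a3 : ∀ k, x - z k ∉ A ↔ z k - x ∉ A := fun k => by rw [← hs]; simp
      have a4 : ∀ k, y - z k ∉ A ↔ z k - x - (-x + y) ∉ A := fun k => by
        rw [← hs]; rw [neg_sub]; have : z k - x - (-x + y) = z k - y := by abel
        rw [this]
      have a5 : i ≠ i.succAbove j := (Fin.succAbove_ne i j).symm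
      simp only [a1, a2, a3, a4, forall_and]
      tauto
    simp only [mem_ofPred_eq, e, mem_compl_iff]
    split_ifs with h
    · simp [h]
    · simp only [h, not_false_eq_true, true_and]
      have := pi_all μ m {w | w - x ∈ {w | w ∉ A ∧ w - (-x+y) ∉ A}}
      rw [meas_shift] at this
      exact this
  simp only [key, lintegral_const, measure_univ, mul_one]

lemma var_generic [μ.IsAddLeftInvariant] (hA : MeasurableSet A) (hs : ∀ x, -x ∈ A ↔ x ∈ A)
    (m : ℕ) :
    variance (fun w : Fin (m+2) → G => ∑ i, if w ∈ isoEv A i then (1:ℝ) else 0)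
      (Measure.pi fun _ => μ) =
    (m+2) * μ.real Aᶜ ^ (m+1) + (m+2) * (m+1) * (∫ y in Aᶜ, (pairF μ A y).toReal ^ m ∂μ)
      - ((m+2) * μ.real Aᶜ ^ (m+1))^2 := by
  set P := Measure.pi fun _ : Fin (m+2) => μ
  have hm := fun i : Fin (m+2) => measurableSet_isoEv hA i
  have h1 : ∀ E : Set (Fin (m+2) → G), MeasurableSet E → 
      Integrable (E.indicator (fun _ => (1:ℝ))) P := fun E hE =>
    (integrable_const 1).indicator hE
  have e1 : ∀ (i : Fin (m+2)) w, (if w ∈ isoEv A i then (1:ℝ) else 0) = 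
     (isoEv A i).indicator (fun _ => 1) w := fun i w => by simp [indicator_apply]
  have e2 : ∀ (i j : Fin (m+2)) w, (isoEv A i).indicator (fun _ => (1:ℝ)) w * 
     (isoEv A j).indicator (fun _ => 1) w = 
     (isoEv A i ∩ isoEv A j).indicator (fun _ => 1) w := fun i j w => by
       by_cases h : w ∈ isoEv A i <;> by_cases h' : w ∈ isoEv A j <;> simp [h, h']
  simp only [e1]
  rw [variance_eq_sub]
  swap
  · exact memLp_finsetSum _ fun i _ => (memLp_const 1).indicator (hm i)
  have q1 : ∀ i : Fin (m+2), P.real (isoEv A i) = μ.real Aᶜ ^ (m+1) := fun i => by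
    simp only [Measure.real, P, prob_one μ hA hs i, ENNReal.toReal_pow]
  set c := ∫ y in Aᶜ, (pairF μ A y).toReal ^ m ∂μ with hc
  have q2 : ∀ i j : Fin (m+2), i ≠ j → P.real (isoEv A i ∩ isoEv A j) = c := fun i j h => by
    simp only [Measure.real, P, prob_two μ hA hs i j h, hc]
    simp only [← ENNReal.toReal_pow]
    rw [integral_toReal]
    · exact ((measurable_pairF μ hA).pow_const m).aemeasurable
    · refine Eventually.of_forall fun y => ?_
      exact ENNReal.pow_lt_top (measure_lt_top _ _)
  congr 1
  · simp only [Pi.pow_apply, pow_two, Finset.sum_mul_sum, e2]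
    rw [integral_finsetSum _ fun i _ => integrable_finsetSum _ fun j _ => h1 _ ((hm i).inter (hm j))]
    have : ∀ i : Fin (m+2), ∫ a, ∑ j, (isoEv A i ∩ isoEv A j).indicator (fun _ => (1:ℝ)) a ∂P =
       μ.real Aᶜ ^ (m+1) + (m+1) * c := by
      intro i
      rw [integral_finsetSum _ fun j _ => h1 _ ((hm i).inter (hm j))]
      simp only [integral_indicator ((hm _).inter (hm _))]
      rw [← Finset.add_sum_erase _ _ (Finset.mem_univ i)]
      congr 1
      · simp [q1]
      · rw [Finset.sum_congr rfl (g := fun _ => c)]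
        · simp
        · intro j hj
          simpa using q2 i j (Finset.ne_of_mem_erase hj).symm
    simp only [this]
    simp; ring
  · rw [integral_finsetSum _ fun i _ => h1 _ (hm i)]
    simp [integral_indicator (hm _), q1]
end Generic

section Geo
open scoped Pointwise
set_option linter.unusedSectionVars false
variable {d : ℕ} {L : ℝ} [hL : Fact (0 < L)]

lemma iInf_eq_norm (u : ℝ) : (⨅ k : ℤ, |u - k * L|) = ‖(u : AddCircle L)‖ := by
  apply le_antisymm
  · rw [AddCircle.norm_eq]
    exact ciInf_le ⟨0, by rintro _ ⟨k, rfl⟩; positivity⟩ (round (L⁻¹ * u))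
  · refine le_ciInf fun k => ?_
    have : (u : AddCircle L) = ((u - k * L : ℝ) : AddCircle L) := by
      rw [AddCircle.coe_sub]
      have : ((k * L : ℝ) : AddCircle L) = 0 := by
        rw [AddCircle.coe_eq_zero_iff]; exact ⟨k, by simp⟩
      rw [this, sub_zero]
    rw [this]
    exact QuotientAddGroup.norm_mk_le_norm

def tN (t : Fin d → AddCircle L) : ℝ := Real.sqrt (∑ i, ‖t i‖ ^ 2)

def tproj (L : ℝ) (x : Fin d → ℝ) : Fin d → AddCircle L := fun i => (x i : AddCircle L)

lemma tN_eq (t : Fin d → AddCircle L) : tN t = ‖(WithLp.toLp 2 t : PiLp 2 fun _ : Fin d => AddCircle L)‖ := by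
  rw [PiLp.norm_eq_of_L2]; rfl

lemma torDist_eq (x y : Fin d → ℝ) : torDist L x y = tN (tproj L x - tproj L y) := by
  simp only [torDist, tN, iInf_eq_norm, Pi.sub_apply, tproj, AddCircle.coe_sub]

lemma tN_neg (t : Fin d → AddCircle L) : tN (-t) = tN t := by simp [tN]

lemma tN_add_le (s t : Fin d → AddCircle L) : tN (s + t) ≤ tN s + tN t := by
  simp only [tN_eq, WithLp.toLp_add]; exact norm_add_le _ _

lemma tN_zero : tN (0 : Fin d → AddCircle L) = 0 := by simp [tN]

lemma tN_cont : Continuous (tN : (Fin d → AddCircle L) → ℝ) := by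
  unfold tN; fun_prop

lemma norm_le_tN (t : Fin d → AddCircle L) (i : Fin d) : ‖t i‖ ≤ tN t := by
  rw [tN_eq]; exact PiLp.norm_apply_le (WithLp.toLp 2 t : PiLp 2 fun _ : Fin d => AddCircle L) i

def tball (d : ℕ) (L r : ℝ) : Set (Fin d → AddCircle L) := {t | tN t ≤ r}

lemma meas_tball (r : ℝ) : MeasurableSet (tball d L r) := measurableSet_le tN_cont.measurable measurable_const

lemma tproj_mp (a : ℝ) : MeasurePreserving (tproj (d := d) L)
    (volume.restrict (univ.pi fun _ => Ioc a (a + L))) volume := by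
  rw [volume_pi, Measure.restrict_pi_pi, volume_pi]
  exact measurePreserving_pi _ _ fun i => AddCircle.measurePreserving_mk L a

lemma tproj_mp_box : MeasurePreserving (tproj (d := d) L) (volume.restrict (box d L)) volume := by
  have := tproj_mp (d := d) (L := L) 0
  rw [zero_add] at this
  rwa [Measure.restrict_congr_set (t := univ.pi fun _ => Ioc 0 L)]
  unfold box
  rw [volume_pi]
  exact Measure.univ_pi_Ico_ae_eq_Icc.trans Measure.univ_pi_Ioc_ae_eq_Icc.symm

/-- norm of projection for small vectors -/
lemma norm_coe_small {u : ℝ} (h : |u| ≤ L / 2) : ‖(u : AddCircle L)‖ = |u| := by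
  rw [AddCircle.norm_coe_eq_abs_iff L hL.out.ne', abs_of_pos hL.out]; exact h

lemma tN_small {x : Fin d → ℝ} (h : ∀ i, |x i| ≤ L / 2) :
    tN (tproj L x) = ‖(WithLp.toLp 2 x : EuclideanSpace ℝ (Fin d))‖ := by
  rw [EuclideanSpace.norm_eq]
  simp only [tN, tproj]
  congr 1
  refine Finset.sum_congr rfl fun i _ => ?_
  rw [norm_coe_small (h i)]; rfl

lemma coord_le (x : Fin d → ℝ) (i : Fin d) : |x i| ≤ ‖(WithLp.toLp 2 x : EuclideanSpace ℝ (Fin d))‖ :=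
  PiLp.norm_apply_le (WithLp.toLp 2 x : EuclideanSpace ℝ (Fin d)) i

lemma mem_cube_abs {x : Fin d → ℝ} (hx : x ∈ univ.pi fun _ : Fin d => Ioc (-(L/2)) (-(L/2) + L)) (i) :
    |x i| ≤ L / 2 := by
  have := hx i (mem_univ i)
  rw [abs_le]; constructor <;> linarith [this.1, this.2]

lemma cube_of_abs {x : Fin d → ℝ} (h : ∀ i, |x i| < L / 2) :
    x ∈ univ.pi fun _ : Fin d => Ioc (-(L/2)) (-(L/2) + L) := by
  intro i _
  have := abs_lt.1 (h i)
  constructor <;> linarith [this.1, this.2]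

lemma vol_inter {r : ℝ} (hr : 4 * r < L) {y : Fin d → ℝ}
    (hy : ‖(WithLp.toLp 2 y : EuclideanSpace ℝ (Fin d))‖ ≤ 2 * r) :
    volume (tball d L r ∩ {t | t - tproj L y ∈ tball d L r}) =
      volume (closedBall (0 : EuclideanSpace ℝ (Fin d)) r ∩ closedBall (WithLp.toLp 2 y) r) := by
  have hm : MeasurableSet (tball d L r ∩ {t | t - tproj L y ∈ tball d L r}) :=
    (meas_tball r).inter ((measurable_id.sub_const (tproj L y)) (meas_tball r))
  have mp := tproj_mp (d := d) (L := L) (-(L/2))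
  rw [← mp.measure_preimage hm.nullMeasurableSet, Measure.restrict_apply (mp.measurable hm),
    ← (PiLp.volume_preserving_toLp (Fin d)).measure_preimage
      (measurableSet_closedBall.inter measurableSet_closedBall).nullMeasurableSet]
  congr 1
  ext x
  have hsub : tproj L x - tproj L y = tproj L (x - y) := by
    ext i; simp [tproj]
  simp only [mem_inter_iff, mem_preimage, mem_ofPred_eq, tball, mem_closedBall, dist_eq_norm, sub_zero, hsub,
    ← WithLp.toLp_sub]
  have hL0 := hL.out
  constructor
  · rintro ⟨⟨h1, h2⟩, h3⟩
    have hx := tN_small (mem_cube_abs h3)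
    rw [hx] at h1
    refine ⟨h1, ?_⟩
    have : ∀ i, |(x - y) i| ≤ L / 2 := by
      intro i
      have a1 := (coord_le x i).trans h1
      have a2 := (coord_le y i).trans hy
      have a3 : |x i - y i| ≤ 3 * r := (abs_sub _ _).trans (by linarith)
      have a4 := (norm_le_tN _ i).trans h2
      simp only [tproj, AddCircle.norm_eq, Pi.sub_apply] at a4
      simp only [Pi.sub_apply]
      generalize round (L⁻¹ * (x i - y i)) = k at a4
      generalize x i - y i = u at *
      have hk : k = 0 := by
        by_contra hk
        have : (1:ℝ) ≤ |(k:ℝ)| := by exact_mod_cast Int.one_le_abs hk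
        have b1 : |(k:ℝ) * L| ≥ L := by rw [abs_mul, abs_of_pos hL0]; nlinarith
        have b2 : |(k:ℝ) * L| ≤ |u| + |u - k * L| := by
          have := abs_sub u (u - k * L)
          simpa using this
        linarith
      subst hk
      simp at a4
      linarith [abs_nonneg u]
    rwa [tN_small this] at h2
  · rintro ⟨h1, h2⟩
    have hr0 : 0 ≤ r := (norm_nonneg _).trans h1
    have hx : ∀ i, |x i| < L / 2 := fun i => lt_of_le_of_lt ((coord_le x i).trans h1) (by linarith)
    have hxy : ∀ i, |(x - y) i| ≤ L / 2 := fun i => ((coord_le (x-y) i).trans h2).trans (by linarith)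
    rw [tN_small fun i => (hx i).le, tN_small hxy]
    exact ⟨⟨h1, h2⟩, cube_of_abs hx⟩

lemma vol_tball {r : ℝ} (hr0 : 0 ≤ r) (hr : 2 * r < L) :
    volume (tball d L r) = volume (closedBall (0 : EuclideanSpace ℝ (Fin d)) r) := by
  have mp := tproj_mp (d := d) (L := L) (-(L/2))
  rw [← mp.measure_preimage (meas_tball r).nullMeasurableSet, Measure.restrict_apply (mp.measurable (meas_tball r)),
    ← (PiLp.volume_preserving_toLp (Fin d)).measure_preimage
      (measurableSet_closedBall).nullMeasurableSet]
  congr 1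
  ext x
  simp only [mem_inter_iff, mem_preimage, mem_ofPred_eq, tball, mem_closedBall, dist_eq_norm, sub_zero]
  constructor
  · rintro ⟨h1, h3⟩
    rwa [tN_small (mem_cube_abs h3)] at h1
  · intro h1
    have hx : ∀ i, |x i| < L / 2 := fun i => lt_of_le_of_lt ((coord_le x i).trans h1) (by linarith)
    rw [tN_small fun i => (hx i).le]
    exact ⟨h1, cube_of_abs hx⟩

lemma vol_ball_phi {r : ℝ} (hr0 : 0 ≤ r) (x : EuclideanSpace ℝ (Fin d)) :
    volume.real (closedBall x r) = phi d r := by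
  rw [Measure.real, Measure.addHaar_closedBall _ _ hr0, phi, unitBallVol, Measure.addHaar_closedBall _ _ zero_le_one]
  simp [ENNReal.toReal_mul, hr0, mul_comm]

lemma phi_two (r : ℝ) : phi d (2 * r) = 2 ^ d * phi d r := by
  simp only [phi, mul_pow]; ring

lemma norm_unitVec (hd : 1 ≤ d) : ‖unitVec d‖ = 1 := by
  have : 0 < d := hd
  simp [unitVec, this]

lemma vol_union_balls (hd : 1 ≤ d) {r : ℝ} (hr : 0 < r) (v : EuclideanSpace ℝ (Fin d)) :
    volume.real (closedBall 0 r ∪ closedBall v r) = r ^ d * omegaVol d (‖v‖ / r) := by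
  set w := (‖v‖ / r) • unitVec d with hw
  have hnorm : ‖w‖ = ‖r⁻¹ • v‖ := by
    rw [hw, norm_smul, norm_smul, norm_unitVec hd, Real.norm_eq_abs, Real.norm_eq_abs, abs_of_pos (inv_pos.2 hr),
      abs_of_nonneg (by positivity)]
    field_simp
  set f := (ℝ ∙ (w - r⁻¹ • v))ᗮ.reflection with hf
  have hfw : f w = r⁻¹ • v := Submodule.reflection_sub hnorm
  have h1 : volume (closedBall (0 : EuclideanSpace ℝ (Fin d)) 1 ∪ closedBall w 1) =
      volume (closedBall (0 : EuclideanSpace ℝ (Fin d)) 1 ∪ closedBall (r⁻¹ • v) 1) := by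
    rw [← f.measurePreserving.measure_preimage (s := closedBall (0 : EuclideanSpace ℝ (Fin d)) 1 ∪ closedBall (r⁻¹ • v) 1)
      (measurableSet_closedBall.union measurableSet_closedBall).nullMeasurableSet]
    congr 1
    rw [preimage_union, ← hfw]
    congr 1
    · ext x; simp
    · ext x; simp [mem_closedBall]
  have h2 : (closedBall 0 r ∪ closedBall v r) = r • (closedBall (0 : EuclideanSpace ℝ (Fin d)) 1 ∪ closedBall (r⁻¹ • v) 1) := by
    rw [smul_set_union, smul_closedBall' hr.ne', smul_closedBall' hr.ne']
    simp [abs_of_pos hr, smul_smul, hr.ne']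
  rw [omegaVol, ← hw, h1, h2, Measure.real, Measure.addHaar_smul]
  simp [ENNReal.toReal_mul, abs_of_pos hr, hr.le]

/-- every torus point has a representative in the centred cube -/
lemma exists_rep (t : Fin d → AddCircle L) : ∃ y : Fin d → ℝ, tproj L y = t ∧ ∀ i, |y i| ≤ L / 2 := by
  have : ∀ i, ∃ y : ℝ, (y : AddCircle L) = t i ∧ |y| ≤ L / 2 := by
    intro i
    have := AddCircle.coe_image_Ioc_eq L (-(L/2))
    have h : t i ∈ (univ : Set (AddCircle L)) := mem_univ _
    rw [← this] at h
    obtain ⟨y, hy, h⟩ := h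
    refine ⟨y, h, abs_le.2 ⟨by linarith [hy.1], by linarith [hy.2]⟩⟩
  choose y hy using this
  exact ⟨y, funext fun i => (hy i).1, fun i => (hy i).2⟩

lemma vol_shift (r : ℝ) (u : Fin d → AddCircle L) :
    volume {t | t - u ∈ tball d L r} = volume (tball d L r) := by
  have := measure_preimage_add (volume : Measure (Fin d → AddCircle L)) (-u) (tball d L r)
  rw [← this]; congr 1; ext z; simp [neg_add_eq_sub]

lemma vol_union_near (hd : 1 ≤ d) {r : ℝ} (hr0 : 0 < r) (hr : 4 * r < L) {u : Fin d → AddCircle L}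
    (hu : tN u ≤ 2 * r) :
    volume.real (tball d L r ∪ {t | t - u ∈ tball d L r}) = r ^ d * omegaVol d (tN u / r) := by
  obtain ⟨y, rfl, hy⟩ := exists_rep u
  rw [tN_small hy] at hu ⊢
  rw [← vol_union_balls hd hr0]
  have hm : MeasurableSet {t | t - tproj L y ∈ tball d L r} :=
    ((measurable_id.sub_const (tproj L y)) (meas_tball r))
  have a := measureReal_union_add_inter (μ := volume) (s := tball d L r) hm
  have b := measureReal_union_add_inter (μ := volume) (s := closedBall (0 : EuclideanSpace ℝ (Fin d)) r) 
    (measurableSet_closedBall (x := WithLp.toLp 2 y) (ε := r)) measure_closedBall_lt_top.ne measure_closedBall_lt_top.ne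
  have c := congrArg ENNReal.toReal (vol_inter hr hu)
  have e := congrArg ENNReal.toReal (vol_shift r (tproj L y))
  have f := congrArg ENNReal.toReal (vol_tball (d := d) (L := L) hr0.le (by linarith))
  simp only [← measureReal_def] at c e f
  rw [vol_ball_phi hr0.le] at b f
  rw [vol_ball_phi hr0.le] at b
  linarith

lemma vol_union_far {r : ℝ} (hr0 : 0 < r) (hr : 4 * r < L) {u : Fin d → AddCircle L}
    (hu : 2 * r < tN u) :
    volume.real (tball d L r ∪ {t | t - u ∈ tball d L r}) = 2 * phi d r := by
  have hm : MeasurableSet {t | t - u ∈ tball d L r} :=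
    ((measurable_id.sub_const u) (meas_tball r))
  rw [measureReal_union _ hm]
  · have e := congrArg ENNReal.toReal (vol_shift r u)
    have f := congrArg ENNReal.toReal (vol_tball (d := d) (L := L) hr0.le (by linarith))
    simp only [← measureReal_def] at e f
    rw [vol_ball_phi hr0.le] at f
    linarith
  · rw [disjoint_left]
    intro t h1 h2
    have h1 : tN t ≤ r := h1
    have h2 : tN (t - u) ≤ r := h2
    have := tN_add_le t (-(t-u))
    rw [tN_neg] at this
    simp at this
    linarith

end Geo

section Main
set_option linter.unusedSectionVars false
variable {d : ℕ} {L : ℝ} [hL : Fact (0 < L)]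

def tmu (d : ℕ) (L : ℝ) [Fact (0 < L)] : Measure (Fin d → AddCircle L) :=
  ((L.toNNReal ^ d)⁻¹ : ℝ≥0) • volume

lemma tproj_mp_unif : MeasurePreserving (tproj (d := d) L) (uniformBox d L) (tmu d L) :=
  tproj_mp_box.smul_measure _

instance : IsProbabilityMeasure (uniformBox d L) := by
  constructor
  have hL0 := hL.out
  have h0 : L.toNNReal ≠ 0 := by simpa using hL0
  simp only [uniformBox, Measure.smul_apply, Measure.restrict_apply_univ, box, Real.volume_pi_Ico]
  simp only [sub_zero, Finset.prod_const, Finset.card_univ, Fintype.card_fin]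
  rw [ENNReal.smul_def, smul_eq_mul, ENNReal.coe_inv (by positivity), ENNReal.ofReal, ENNReal.coe_pow]
  exact ENNReal.inv_mul_cancel (by simpa using fun h => absurd hL0 (not_lt.2 h)) (by simp)

instance : IsProbabilityMeasure (tmu d L) :=
  ⟨by rw [← (tproj_mp_unif (d := d) (L := L)).map_eq, Measure.map_apply tproj_mp_unif.measurable .univ]; simp⟩

instance : (tmu d L).IsAddLeftInvariant := by
  unfold tmu; infer_instance

lemma tmu_real (s : Set (Fin d → AddCircle L)) : (tmu d L).real s = volume.real s / L ^ d := by
  have hL0 := hL.out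
  simp only [tmu, Measure.real, Measure.smul_apply, ENNReal.smul_def, smul_eq_mul, ENNReal.toReal_mul]
  simp [hL0.le]; ring

lemma ae_ne (hd : 1 ≤ d) {m : ℕ} (i j : Fin (m+1)) (hij : i ≠ j) :
    ∀ᵐ w ∂(Measure.pi fun _ : Fin (m+1) => uniformBox d L), w i ≠ w j := by
  obtain ⟨j, rfl⟩ := Fin.exists_succAbove_eq hij.symm
  haveI : Nonempty (Fin d) := ⟨⟨0, hd⟩⟩
  have hm : MeasurableSet {w : Fin (m+1) → Fin d → ℝ | w i = w (i.succAbove j)} :=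
    measurableSet_eq_fun (measurable_pi_apply _) (measurable_pi_apply _)
  rw [ae_iff]
  simp only [ne_eq, not_not]
  rw [pi_split _ i hm]
  simp only [mem_ofPred_eq, Fin.insertNth_apply_same, Fin.insertNth_apply_succAbove]
  rw [lintegral_eq_zero_of_ae_eq_zero]
  refine Eventually.of_forall fun x => ?_
  have : uniformBox d L {x} = 0 := by
    simp [uniformBox]
  have := Measure.pi_eval_preimage_null (fun _ : Fin m => uniformBox d L) (i := j) this
  simp only [Pi.zero_apply]
  convert this using 2
  ext z; simp [eq_comm]

lemma ae_box {m : ℕ} (i : Fin m) :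
    ∀ᵐ w ∂(Measure.pi fun _ : Fin m => uniformBox d L), w i ∈ box d L := by
  have h : ∀ᵐ x ∂(uniformBox d L), x ∈ box d L := by
    unfold uniformBox
    refine Measure.ae_smul_measure ?_ _
    exact ae_restrict_mem (MeasurableSet.univ_pi fun _ => measurableSet_Ico)
  exact (Measure.quasiMeasurePreserving_eval (fun _ : Fin m => uniformBox d L) i).ae h

lemma iso_iff {m : ℕ} {ρ : ℝ} (hρ : 0 < ρ) (w : Fin m → Fin d → ℝ) (hb : ∀ i, w i ∈ box d L)
    (hne : ∀ i j, i ≠ j → w i ≠ w j) (i : Fin m) :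
    Set.range w ∩ torBall L (w i) ρ = {w i} ↔ (fun k => tproj L (w k)) ∈ isoEv (tball d L ρ) i := by
  have hself : w i ∈ torBall L (w i) ρ := by
    refine ⟨hb i, ?_⟩
    rw [torDist_eq, sub_self, tN_zero]; exact hρ.le
  constructor
  · intro h k hk hmem
    have : w k ∈ Set.range w ∩ torBall L (w i) ρ := by
      refine ⟨⟨k, rfl⟩, hb k, ?_⟩
      rw [torDist_eq]; exact hmem
    rw [h] at this
    exact hne k i hk this
  · intro h
    apply Subset.antisymm
    · rintro _ ⟨⟨k, rfl⟩, -, hk⟩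
      by_contra hc
      have hki : k ≠ i := by rintro rfl; exact hc rfl
      refine h k hki ?_
      rw [torDist_eq] at hk; exact hk
    · rintro _ rfl
      exact ⟨⟨i, rfl⟩, hself⟩

lemma pairF_eq (ρ : ℝ) (u : Fin d → AddCircle L) :
    (pairF (tmu d L) (tball d L ρ) u).toReal =
      1 - volume.real (tball d L ρ ∪ {t | t - u ∈ tball d L ρ}) / L ^ d := by
  have hm : MeasurableSet (tball d L ρ ∪ {t | t - u ∈ tball d L ρ}) :=
    (meas_tball ρ).union ((measurable_id.sub_const u) (meas_tball ρ))
  rw [← tmu_real, ← probReal_compl_eq_one_sub hm, Measure.real, pairF]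
  congr 2
  ext z; simp

lemma tball_real {r : ℝ} (hr0 : 0 ≤ r) (hr : 2 * r < L) : volume.real (tball d L r) = phi d r := by
  rw [Measure.real, vol_tball hr0 hr, ← measureReal_def, vol_ball_phi hr0]

lemma tvol_univ : volume.real (univ : Set (Fin d → AddCircle L)) = L ^ d := by
  have h := tmu_real (d := d) (L := L) univ
  have hL0 := hL.out
  rw [probReal_univ] at h
  field_simp at h
  exact h.symm

lemma pair_integral (hd : 1 ≤ d) {ρ : ℝ} (hρ : 0 < ρ) (h4 : 4 * ρ < L) (m : ℕ) :
    ∫ y in (tball d L ρ)ᶜ, (pairF (tmu d L) (tball d L ρ) y).toReal ^ m ∂(tmu d L) =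
    (L ^ d)⁻¹ * ((∫ y in torBall L (0 : Fin d → ℝ) (2 * ρ) \ torBall L (0 : Fin d → ℝ) ρ,
            (1 - ρ ^ d * omegaVol d (torDist L (0 : Fin d → ℝ) y / ρ) / L ^ d) ^ m) + 
       (L ^ d - 2 ^ d * phi d ρ) * (1 - 2 * phi d ρ / L ^ d) ^ m) := by
  have hL0 := hL.out
  set g : (Fin d → AddCircle L) → ℝ := fun y => (pairF (tmu d L) (tball d L ρ) y).toReal ^ m with hg
  have gm : Measurable g := ((measurable_pairF (tmu d L) (meas_tball ρ)).ennreal_toReal).pow_const m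
  have gi : Integrable g volume := by
    refine Integrable.of_bound gm.aestronglyMeasurable 1 (Eventually.of_forall fun y => ?_)
    rw [hg, Real.norm_eq_abs, abs_of_nonneg (by positivity)]
    exact pow_le_one₀ ENNReal.toReal_nonneg (measureReal_le_one (μ := tmu d L))
  have hsub : tball d L ρ ⊆ tball d L (2 * ρ) := fun t ht => by
    have h : tN t ≤ ρ := ht
    have h' : tN t ≤ 2 * ρ := by linarith
    exact h'
  have hsplit : (tball d L ρ)ᶜ = (tball d L (2 * ρ) \ tball d L ρ) ∪ (tball d L (2 * ρ))ᶜ := by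
    ext t
    have := @hsub t
    simp only [mem_compl_iff, mem_union, mem_diff]
    tauto
  have hdisj : Disjoint (tball d L (2 * ρ) \ tball d L ρ) (tball d L (2 * ρ))ᶜ :=
    disjoint_compl_right.mono_left diff_subset
  have h1 : ∫ y in (tball d L ρ)ᶜ, g y ∂(tmu d L) = (L ^ d)⁻¹ * ∫ y in (tball d L ρ)ᶜ, g y := by
    rw [tmu, Measure.restrict_smul, integral_smul_nnreal_measure, NNReal.smul_def, smul_eq_mul]
    congr 1
    simp [hL0.le]
  rw [h1, hsplit, setIntegral_union hdisj (meas_tball _).compl gi.integrableOn gi.integrableOn]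
  congr 2
  · have mp := tproj_mp_box (d := d) (L := L)
    have hm := (meas_tball (d := d) (L := L) (2 * ρ)).diff (meas_tball ρ)
    rw [← mp.map_eq, setIntegral_map hm gm.aestronglyMeasurable mp.measurable.aemeasurable,
      Measure.restrict_restrict (mp.measurable hm)]
    have t0 : ∀ y : Fin d → ℝ, torDist L 0 y = tN (tproj L y) := fun y => by
      rw [torDist_eq]
      have : tproj L (0 : Fin d → ℝ) = 0 := by ext i; simp [tproj]
      rw [this, zero_sub, tN_neg]
    have hset : tproj L ⁻¹' (tball d L (2 * ρ) \ tball d L ρ) ∩ box d L =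
        torBall L (0 : Fin d → ℝ) (2 * ρ) \ torBall L (0 : Fin d → ℝ) ρ := by
      ext y
      simp only [torBall, tball, t0, mem_inter_iff, mem_preimage, mem_diff, mem_ofPred_eq]
      tauto
    rw [← hset]
    refine setIntegral_congr_fun ((mp.measurable hm).inter (MeasurableSet.univ_pi fun _ => measurableSet_Ico)) ?_
    intro y hy
    simp only [hg]
    rw [pairF_eq, vol_union_near hd hρ h4 hy.1.1, t0]
  · rw [setIntegral_congr_fun (g := fun _ => (1 - 2 * phi d ρ / L ^ d) ^ m) (meas_tball _).compl]
    · rw [setIntegral_const, smul_eq_mul, measureReal_compl (meas_tball _), tvol_univ,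
        tball_real (by positivity) (by linarith), phi_two]
    · intro y hy
      simp only [hg]
      rw [pairF_eq, vol_union_far hρ h4 (not_le.1 hy)]

end Main

/-- Formula (7.3) of Goldstein–Penrose: exact variance of the number of isolated points. -/
theorem variance_isolCount_formula (d n : ℕ) (hd : 1 ≤ d) (hn : 4 ≤ n) (ρ : ℝ)
    (hρ : 0 < ρ) (h4ρ : 4 * ρ < sideLen d n) :
    variance (isolCount d n ρ) (binppLaw d n) =
      n * (1 - phi d ρ / n) ^ (n - 1) * (1 - (1 - phi d ρ / n) ^ (n - 1)) +
        ((n : ℝ) - 1) *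
          (∫ y in torBall (sideLen d n) (0 : Fin d → ℝ) (2 * ρ) \ torBall (sideLen d n) (0 : Fin d → ℝ) ρ,
            (1 - ρ ^ d * omegaVol d (torDist (sideLen d n) (0 : Fin d → ℝ) y / ρ) / n) ^ (n - 2) ∂volume) +
        n * ((n : ℝ) - 1) *
          ((1 - 2 ^ d * phi d ρ / n) * (1 - 2 * phi d ρ / n) ^ (n - 2) -
            (1 - phi d ρ / n) ^ (2 * n - 2)) := by
  obtain ⟨m, rfl⟩ : ∃ m, n = m + 2 := ⟨n - 2, by omega⟩
  have hLd : sideLen d (m+2) ^ d = ((m + 2 : ℕ) : ℝ) := by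
    rw [sideLen, ← Real.rpow_natCast, ← Real.rpow_mul (by positivity), inv_mul_cancel₀ (by positivity),
      Real.rpow_one]
  unfold binppLaw isolCount
  set L := sideLen d (m+2) with hLdef
  haveI hL : Fact (0 < L) := ⟨by linarith⟩
  have mp := measurePreserving_pi (fun _ : Fin (m+2) => uniformBox d L) (fun _ => tmu d L)
    (fun _ => tproj_mp_unif)
  have hs : ∀ x : Fin d → AddCircle L, -x ∈ tball d L ρ ↔ x ∈ tball d L ρ := fun x => by
    simp [tball, tN_neg]
  have hfm : Measurable (fun w : Fin (m+2) → Fin d → AddCircle L =>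
      ∑ i, if w ∈ isoEv (tball d L ρ) i then (1:ℝ) else 0) :=
    Finset.measurable_sum _ fun i _ =>
      Measurable.ite (measurableSet_isoEv (meas_tball ρ) i) measurable_const measurable_const
  have hvar := var_generic (tmu d L) (meas_tball ρ) hs m
  rw [← mp.variance_fun_comp hfm.aemeasurable] at hvar
  rw [variance_congr (Y := fun w : Fin (m+2) → Fin d → ℝ =>
      ∑ i, if (fun k => tproj L (w k)) ∈ isoEv (tball d L ρ) i then (1:ℝ) else 0)]
  swap
  · have b := ae_all_iff.2 fun i : Fin (m+2) => ae_box (d := d) (L := L) i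
    have c := ae_all_iff.2 fun i : Fin (m+2) => ae_all_iff.2 fun j => 
      ae_all_iff.2 fun hij : i ≠ j => ae_ne (L := L) hd i j hij
    filter_upwards [b, c] with w hb hc
    exact Finset.sum_congr rfl fun i _ => by simp only [iso_iff hρ w hb hc i]
  rw [hvar, pair_integral hd hρ h4ρ, probReal_compl_eq_one_sub (meas_tball ρ), tmu_real, 
    tball_real hρ.le (by linarith), hLd]
  have e1 : m + 2 - 2 = m := by omega
  have e2 : m + 2 - 1 = m + 1 := by omega
  have e3 : 2 * (m + 2) - 2 = (m + 1) * 2 := by omega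
  rw [e1, e2, e3, pow_mul]
  generalize (∫ y in torBall L (0 : Fin d → ℝ) (2 * ρ) \ torBall L (0 : Fin d → ℝ) ρ,
            (1 - ρ ^ d * omegaVol d (torDist L (0 : Fin d → ℝ) y / ρ) / ((m + 2 : ℕ) : ℝ)) ^ m) = I
  generalize (1 - phi d ρ / ((m + 2 : ℕ) : ℝ)) ^ (m + 1) = a
  generalize (1 - 2 * phi d ρ / ((m + 2 : ℕ) : ℝ)) ^ m = b
  have : (m : ℝ) + 2 ≠ 0 := by positivity
  push_cast
  field_simp
  ring

end
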